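/- Let 0 < s, t with s + t ≤ 1, and let Φ : M_m(ℂ) → M_n(ℂ) be a semiunital Schwarz map with Φ†(I) positive definite. Then for all positive definite X, Y ∈ M_n(ℂ) and all K ∈ M_n(ℂ): tr[Φ†(K*) Φ†(Y)^{-s} Φ†(K) Φ†(X)^{-t}] ≤ (n/m)^{1-(s+t)} tr[K* Y^{-s} K X^{-t}]. -/

import Mathlib

open Matrix
open scoped ComplexOrder

/-- Real power of a matrix, defined spectrally for Hermitian matrices (junk value `0` otherwise). -/
noncomputable def mpow {k : ℕ} (A : Matrix (Fin k) (Fin k) ℂ) (p : ℝ) : Matrix (Fin k) (Fin k) ℂ :=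
  if hA : A.IsHermitian then
    (hA.eigenvectorUnitary : Matrix (Fin k) (Fin k) ℂ) *
      Matrix.diagonal (fun i => ((hA.eigenvalues i ^ p : ℝ) : ℂ)) *
      (hA.eigenvectorUnitary : Matrix (Fin k) (Fin k) ℂ)ᴴ
  else 0

/-- A Schwarz map: `Φ(K*K) ≥ Φ(K)*Φ(K)` for all `K`. -/
def IsSchwarz {a b : ℕ} (Φ : Matrix (Fin a) (Fin a) ℂ →ₗ[ℂ] Matrix (Fin b) (Fin b) ℂ) : Prop :=
  ∀ K, (Φ (Kᴴ * K) - (Φ K)ᴴ * Φ K).PosSemidef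

/-- A positive map: sends positive semidefinite matrices to positive semidefinite matrices. -/
def IsPositiveMap {a b : ℕ} (Φ : Matrix (Fin a) (Fin a) ℂ →ₗ[ℂ] Matrix (Fin b) (Fin b) ℂ) : Prop :=
  ∀ X, X.PosSemidef → (Φ X).PosSemidef

/-- `Ψ` is the Hilbert–Schmidt adjoint of `Φ`: `⟨X, Φ Y⟩ = ⟨Ψ X, Y⟩`. -/
def IsHSAdjoint {a b : ℕ} (Φ : Matrix (Fin a) (Fin a) ℂ →ₗ[ℂ] Matrix (Fin b) (Fin b) ℂ)
    (Ψ : Matrix (Fin b) (Fin b) ℂ →ₗ[ℂ] Matrix (Fin a) (Fin a) ℂ) : Prop :=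
  ∀ X Y, (Xᴴ * Φ Y).trace = ((Ψ X)ᴴ * Y).trace

/-!
Vectorization turns `Φ` into a matrix `V`, its Hilbert–Schmidt adjoint `Ψ` into `Vᴴ`, and
`K ↦ A * K * B` into `Bᵀ ⊗ₖ A`. The Schwarz inequality for `K` and for `Kᴴ`, paired with a positive
weight and moved across the adjoint, gives
`Vᴴ (Xᵀ ⊗ 1) V ≤ (Ψ X)ᵀ ⊗ 1`, `Vᴴ (1 ⊗ Y) V ≤ 1 ⊗ Ψ Y` and `Vᴴ V ≤ n / m`.

By Schur complements, `Vᴴ B V ≤ A` is equivalent to the dual inequality `V A⁻¹ Vᴴ ≤ B⁻¹`. If `A`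
ranges over matrices diagonal in one basis and `B` over matrices diagonal in another, the pairs
satisfying the bound therefore form a log-convex set: the bounds for `(A, B)` and `(A', B')` add up
to one for `(A + l A', B + l B')`, and integrating its dual against `l ^ (q - 1) dl` yields the dual
of the bound for `(A ^ (1 - q) A' ^ q, B ^ (1 - q) B' ^ q)`. Interpolating the three inequalities
with exponents `t`, `s` and `1 - (s + t)` and dualizing once more gives the claim, tested on the
vectorization of `K`.
-/

open scoped Kronecker MatrixOrder

section Analysis

open MeasureTheory Real Set

theorem rpow_mul_inv_exp_add_mul_exp_eq {q l : ℝ} (hq : q ∈ Ioo (0 : ℝ) 1) (hl : 0 < l) (x y : ℝ) :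
    l ^ (q - 1) * (exp x + l * exp y)⁻¹ = exp (-x) * rpowIntegrand₀₁ q l (exp (x - y)) := by
  rw [rpowIntegrand₀₁_eq_pow_div hq hl.le (exp_pos _).le, exp_neg, exp_sub]
  field_simp
  ring

theorem integrableOn_rpow_mul_inv_exp_add_mul_exp {q : ℝ} (hq : q ∈ Ioo (0 : ℝ) 1) (x y : ℝ) :
    IntegrableOn (fun l ↦ l ^ (q - 1) * (exp x + l * exp y)⁻¹) (Ioi 0) :=
  ((integrableOn_rpowIntegrand₀₁_Ioi hq (exp_pos (x - y)).le).const_mul (exp (-x))).congr <|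
    ae_restrict_of_forall_mem measurableSet_Ioi fun _ hl ↦
      (rpow_mul_inv_exp_add_mul_exp_eq hq hl x y).symm

theorem integral_rpow_mul_inv_exp_add_mul_exp {q : ℝ} (hq : q ∈ Ioo (0 : ℝ) 1) (x y : ℝ) :
    ∫ l in Ioi 0, l ^ (q - 1) * (exp x + l * exp y)⁻¹ =
      exp (-((1 - q) * x + q * y)) * ∫ l in Ioi 0, rpowIntegrand₀₁ q l 1 := by
  rw [setIntegral_congr_fun measurableSet_Ioi fun l hl ↦ rpow_mul_inv_exp_add_mul_exp_eq hq hl x y,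
    integral_const_mul, integral_rpowIntegrand₀₁_eq_rpow_mul_const hq (exp_pos _).le, ← mul_assoc,
    ← exp_mul, ← exp_add]
  ring_nf

variable {ι κ : Type*} [Fintype ι] [Fintype κ]

theorem integrableOn_sum_rpow_mul_inv_exp_add_mul_exp {q : ℝ} (hq : q ∈ Ioo (0 : ℝ) 1)
    (x y u : ι → ℝ) :
    IntegrableOn (fun l ↦ ∑ i, l ^ (q - 1) * (exp (x i) + l * exp (y i))⁻¹ * u i) (Ioi 0) :=
  integrable_finsetSum _ fun i _ ↦
    (integrableOn_rpow_mul_inv_exp_add_mul_exp hq (x i) (y i)).mul_const (u i)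

theorem integral_sum_rpow_mul_inv_exp_add_mul_exp {q : ℝ} (hq : q ∈ Ioo (0 : ℝ) 1)
    (x y u : ι → ℝ) :
    ∫ l in Ioi 0, ∑ i, l ^ (q - 1) * (exp (x i) + l * exp (y i))⁻¹ * u i =
      (∑ i, exp (-((1 - q) * x i + q * y i)) * u i) * ∫ l in Ioi 0, rpowIntegrand₀₁ q l 1 := by
  rw [integral_finsetSum _ fun i _ ↦
    (integrableOn_rpow_mul_inv_exp_add_mul_exp hq (x i) (y i)).mul_const (u i), Finset.sum_mul]
  refine Finset.sum_congr rfl fun i _ ↦ ?_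
  rw [integral_mul_const, integral_rpow_mul_inv_exp_add_mul_exp hq, mul_right_comm]

theorem sum_exp_neg_mul_le_of_forall_sum_inv_mul_le {x x' u : ι → ℝ} {y y' v : κ → ℝ}
    (h : ∀ l > 0, ∑ i, (exp (x i) + l * exp (x' i))⁻¹ * u i ≤
      ∑ k, (exp (y k) + l * exp (y' k))⁻¹ * v k) {q : ℝ} (hq : q ∈ Ioo (0 : ℝ) 1) :
    ∑ i, exp (-((1 - q) * x i + q * x' i)) * u i ≤
      ∑ k, exp (-((1 - q) * y k + q * y' k)) * v k := by
  refine le_of_mul_le_mul_right ?_ (integral_rpowIntegrand₀₁_one_pos hq)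
  rw [← integral_sum_rpow_mul_inv_exp_add_mul_exp hq,
    ← integral_sum_rpow_mul_inv_exp_add_mul_exp hq]
  refine setIntegral_mono_on (integrableOn_sum_rpow_mul_inv_exp_add_mul_exp hq x x' u)
    (integrableOn_sum_rpow_mul_inv_exp_add_mul_exp hq y y' v) measurableSet_Ioi fun l hl ↦ ?_
  simpa only [mul_assoc, ← Finset.mul_sum] using
    mul_le_mul_of_nonneg_left (h l hl) (rpow_nonneg (le_of_lt hl) (q - 1))

end Analysis

section ConjDiagonal

variable {ι κ τ 𝕜 : Type*} [Fintype ι] [DecidableEq ι] [RCLike 𝕜]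

/-- The matrix `U diag(f) Uᴴ` with real weights `f`. A Hermitian matrix is of this form with `U`
unitary, and its functional calculus then acts on `f`; two matrices written with the same unitary
`U` commute, so weights are added, multiplied and raised to powers pointwise. -/
def conjDiagonal (U : Matrix κ ι 𝕜) (f : ι → ℝ) : Matrix κ κ 𝕜 :=
  U * diagonal (fun i ↦ (f i : 𝕜)) * Uᴴ

theorem conjDiagonal_add (U : Matrix κ ι 𝕜) (f g : ι → ℝ) :
    conjDiagonal U (f + g) = conjDiagonal U f + conjDiagonal U g := by
  simp [conjDiagonal, ← diagonal_add, Matrix.mul_add, Matrix.add_mul]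

theorem conjDiagonal_smul (U : Matrix κ ι 𝕜) (c : ℝ) (f : ι → ℝ) :
    conjDiagonal U (c • f) = c • conjDiagonal U f := by
  have : diagonal (fun i ↦ ((c • f) i : 𝕜)) = c • diagonal (fun i ↦ (f i : 𝕜)) := by
    rw [← diagonal_smul]
    simp [Pi.smul_def, RCLike.real_smul_eq_coe_mul]
  rw [conjDiagonal, this, Matrix.mul_smul, Matrix.smul_mul, conjDiagonal]

theorem isHermitian_conjDiagonal (U : Matrix κ ι 𝕜) (f : ι → ℝ) : (conjDiagonal U f).IsHermitian :=
  isHermitian_mul_mul_conjTranspose U <| isHermitian_diagonal_iff.2 fun i ↦ RCLike.conj_ofReal (f i)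

theorem transpose_conjDiagonal (U : Matrix κ ι 𝕜) (f : ι → ℝ) :
    (conjDiagonal U f)ᵀ = conjDiagonal (U.map star) f := by
  have : (U.map star)ᴴ = Uᵀ := by ext; simp
  rw [conjDiagonal, transpose_mul, transpose_mul, diagonal_transpose, ← Matrix.mul_assoc,
    conjDiagonal, this]
  rfl

theorem conjDiagonal_kronecker_conjDiagonal {σ : Type*} [Fintype τ] [DecidableEq τ]
    (U : Matrix κ ι 𝕜) (W : Matrix σ τ 𝕜) (f : ι → ℝ) (g : τ → ℝ) :
    conjDiagonal U f ⊗ₖ conjDiagonal W g = conjDiagonal (U ⊗ₖ W) (fun p ↦ f p.1 * g p.2) := by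
  simp only [conjDiagonal, mul_kronecker_mul, conjTranspose_kronecker,
    diagonal_kronecker_diagonal, RCLike.ofReal_mul]

variable [Fintype κ]

theorem mul_conjDiagonal_mul_conjTranspose (V : Matrix τ κ 𝕜) (U : Matrix κ ι 𝕜) (f : ι → ℝ) :
    V * conjDiagonal U f * Vᴴ = conjDiagonal (V * U) f := by
  simp only [conjDiagonal, conjTranspose_mul, Matrix.mul_assoc]

theorem star_dotProduct_conjDiagonal_mulVec (U : Matrix κ ι 𝕜) (f : ι → ℝ) (z : κ → 𝕜) :
    star z ⬝ᵥ conjDiagonal U f *ᵥ z = ((∑ i, f i * ‖(Uᴴ *ᵥ z) i‖ ^ 2 : ℝ) : 𝕜) := by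
  rw [conjDiagonal, ← mulVec_mulVec, ← mulVec_mulVec, dotProduct_mulVec,
    ← conjTranspose_conjTranspose U, ← star_mulVec, conjTranspose_conjTranspose]
  simp only [dotProduct, mulVec_diagonal, Pi.star_apply, RCLike.ofReal_sum]
  refine Finset.sum_congr rfl fun i _ ↦ ?_
  rw [mul_left_comm, RCLike.star_def, RCLike.conj_mul]
  norm_cast

theorem conjDiagonal_le_conjDiagonal_iff [Fintype τ] [DecidableEq τ] {U : Matrix κ ι 𝕜}
    {W : Matrix κ τ 𝕜} {f : ι → ℝ} {g : τ → ℝ} :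
    conjDiagonal U f ≤ conjDiagonal W g ↔
      ∀ z, ∑ i, f i * ‖(Uᴴ *ᵥ z) i‖ ^ 2 ≤ ∑ k, g k * ‖(Wᴴ *ᵥ z) k‖ ^ 2 := by
  rw [le_iff, posSemidef_iff_dotProduct_mulVec,
    and_iff_right ((isHermitian_conjDiagonal W g).sub (isHermitian_conjDiagonal U f))]
  simp only [sub_mulVec, dotProduct_sub, star_dotProduct_conjDiagonal_mulVec, sub_nonneg,
    RCLike.ofReal_le_ofReal]

end ConjDiagonal

section Interpolation

variable {ι κ 𝕜 : Type*} [Fintype ι] [Fintype κ] [DecidableEq ι] [DecidableEq κ] [RCLike 𝕜]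

theorem conjTranspose_mul_mul_le_iff_mul_inv_mul_le_inv {A : Matrix ι ι 𝕜} {B : Matrix κ κ 𝕜}
    (hA : A.PosDef) (hB : B.PosDef) (V : Matrix κ ι 𝕜) :
    Vᴴ * B * V ≤ A ↔ V * A⁻¹ * Vᴴ ≤ B⁻¹ := by
  let := hA.isUnit.invertible
  let := hB.isUnit.invertible
  let := hB.inv.isUnit.invertible
  rw [le_iff, le_iff, ← PosDef.fromBlocks₂₂ B⁻¹ V hA, PosDef.fromBlocks₁₁ V A hB.inv,
    inv_inv_of_invertible]

theorem conjDiagonal_const {U : Matrix ι ι 𝕜} (hU : U ∈ unitaryGroup ι 𝕜) (c : ℝ) :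
    conjDiagonal U (fun _ ↦ c) = c • 1 := by
  have : diagonal (fun _ : ι ↦ (c : 𝕜)) = c • 1 := by
    rw [← algebraMap_smul 𝕜 c, smul_one_eq_diagonal, RCLike.algebraMap_eq_ofReal]
  rw [conjDiagonal, this, mul_smul_comm, smul_mul_assoc, mul_one, ← star_eq_conjTranspose,
    mem_unitaryGroup_iff.1 hU]

theorem inv_conjDiagonal {U : Matrix ι ι 𝕜} (hU : U ∈ unitaryGroup ι 𝕜) {f : ι → ℝ}
    (hf : ∀ i, f i ≠ 0) : (conjDiagonal U f)⁻¹ = conjDiagonal U f⁻¹ := by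
  have hU' : Uᴴ * U = 1 := mem_unitaryGroup_iff'.1 hU
  have hU'' : U * Uᴴ = 1 := mem_unitaryGroup_iff.1 hU
  refine inv_eq_right_inv ?_
  calc conjDiagonal U f * conjDiagonal U f⁻¹
      = U * diagonal (fun i ↦ (f i : 𝕜)) * (Uᴴ * U) * diagonal (fun i ↦ (f⁻¹ i : 𝕜)) * Uᴴ := by
        simp only [conjDiagonal, mul_assoc]
    _ = 1 := by simp [hU', hU'', mul_assoc U, hf]

theorem posDef_conjDiagonal {U : Matrix ι ι 𝕜} (hU : U ∈ unitaryGroup ι 𝕜) {f : ι → ℝ}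
    (hf : ∀ i, 0 < f i) : (conjDiagonal U f).PosDef := by
  refine (PosDef.diagonal fun i ↦ RCLike.ofReal_pos.2 (hf i)).mul_mul_conjTranspose_same ?_
  exact vecMul_injective_of_isUnit (Unitary.isUnit_coe (U := ⟨U, hU⟩))

theorem conjTranspose_mul_conjDiagonal_mul_le_iff {V : Matrix κ ι 𝕜} {T : Matrix ι ι 𝕜}
    {S : Matrix κ κ 𝕜} (hT : T ∈ unitaryGroup ι 𝕜) (hS : S ∈ unitaryGroup κ 𝕜)
    {a : ι → ℝ} {b : κ → ℝ} (ha : ∀ i, 0 < a i) (hb : ∀ k, 0 < b k) :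
    Vᴴ * conjDiagonal S b * V ≤ conjDiagonal T a ↔ ∀ z,
      ∑ i, (a i)⁻¹ * ‖(Tᴴ *ᵥ Vᴴ *ᵥ z) i‖ ^ 2 ≤ ∑ k, (b k)⁻¹ * ‖(Sᴴ *ᵥ z) k‖ ^ 2 := by
  rw [conjTranspose_mul_mul_le_iff_mul_inv_mul_le_inv (posDef_conjDiagonal hT ha)
    (posDef_conjDiagonal hS hb), inv_conjDiagonal hT fun i ↦ (ha i).ne',
    inv_conjDiagonal hS fun k ↦ (hb k).ne', mul_conjDiagonal_mul_conjTranspose,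
    conjDiagonal_le_conjDiagonal_iff]
  simp only [conjTranspose_mul, ← mulVec_mulVec, Pi.inv_apply]

theorem convex_setOf_conjDiagonal_exp_le (V : Matrix κ ι 𝕜) {T : Matrix ι ι 𝕜}
    {S : Matrix κ κ 𝕜} (hT : T ∈ unitaryGroup ι 𝕜) (hS : S ∈ unitaryGroup κ 𝕜) :
    Convex ℝ {w : (ι → ℝ) × (κ → ℝ) |
      Vᴴ * conjDiagonal S (fun k ↦ Real.exp (w.2 k)) * V ≤
        conjDiagonal T (fun i ↦ Real.exp (w.1 i))} := by
  refine convex_iff_forall_pos.2 fun w hw w' hw' p q hp hq hpq ↦ ?_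
  obtain rfl : p = 1 - q := by linarith
  simp only [Set.mem_ofPred_eq] at hw hw' ⊢
  rw [conjTranspose_mul_conjDiagonal_mul_le_iff hT hS (fun _ ↦ Real.exp_pos _)
    fun _ ↦ Real.exp_pos _]
  intro z
  simp only [← Real.exp_neg]
  refine sum_exp_neg_mul_le_of_forall_sum_inv_mul_le (fun l hl ↦ ?_) ⟨hq, by linarith⟩
  refine (conjTranspose_mul_conjDiagonal_mul_le_iff hT hS
    (a := (fun i ↦ Real.exp (w.1 i)) + l • fun i ↦ Real.exp (w'.1 i))
    (b := (fun k ↦ Real.exp (w.2 k)) + l • fun k ↦ Real.exp (w'.2 k))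
    (fun i ↦ add_pos (Real.exp_pos _) (mul_pos hl (Real.exp_pos _)))
    fun k ↦ add_pos (Real.exp_pos _) (mul_pos hl (Real.exp_pos _))).1 ?_ z
  simp only [conjDiagonal_add, conjDiagonal_smul, Matrix.mul_add, Matrix.add_mul,
    Matrix.mul_smul, Matrix.smul_mul]
  exact add_le_add hw (smul_le_smul_of_nonneg_left hw' hl.le)

open Real in
theorem conjTranspose_mul_conjDiagonal_rpow_mul_le {V : Matrix κ ι 𝕜} {T : Matrix ι ι 𝕜}
    {S : Matrix κ κ 𝕜} (hT : T ∈ unitaryGroup ι 𝕜) (hS : S ∈ unitaryGroup κ 𝕜)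
    {a a' : ι → ℝ} {b b' : κ → ℝ} (ha : ∀ i, 0 < a i) (ha' : ∀ i, 0 < a' i)
    (hb : ∀ k, 0 < b k) (hb' : ∀ k, 0 < b' k) {c : ℝ} (hc : 0 < c)
    (h : Vᴴ * conjDiagonal S b * V ≤ conjDiagonal T a)
    (h' : Vᴴ * conjDiagonal S b' * V ≤ conjDiagonal T a')
    (hV : Vᴴ * V ≤ c • 1) {s t : ℝ} (hs : 0 ≤ s) (ht : 0 ≤ t) (hst : s + t ≤ 1) :
    Vᴴ * conjDiagonal S (fun k ↦ b k ^ s * b' k ^ t) * V ≤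
      c ^ (1 - (s + t)) • conjDiagonal T (fun i ↦ a i ^ s * a' i ^ t) := by
  have h_mem := (convex_setOf_conjDiagonal_exp_le V hT hS).sum_mem (t := Finset.univ)
    (w := ![s, t, 1 - (s + t)])
    (z := ![(fun i ↦ log (a i), fun k ↦ log (b k)), (fun i ↦ log (a' i), fun k ↦ log (b' k)),
      (fun _ ↦ log c, fun _ ↦ 0)])
    (by simp [Fin.forall_fin_succ, hs, ht, hst]) (by simp [Fin.sum_univ_three])
    (by simp [Fin.forall_fin_succ, exp_log, *, conjDiagonal_const])
  have hb_exp : (fun k ↦ b k ^ s * b' k ^ t) = fun k ↦ exp (s * log (b k) + t * log (b' k)) := by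
    ext k
    rw [rpow_def_of_pos (hb k), rpow_def_of_pos (hb' k), exp_add, mul_comm s, mul_comm t]
  have ha_exp : (c ^ (1 - (s + t)) • fun i ↦ a i ^ s * a' i ^ t) =
      fun i ↦ exp (s * log (a i) + t * log (a' i) + (1 - (s + t)) * log c) := by
    ext i
    rw [Pi.smul_apply, smul_eq_mul, rpow_def_of_pos hc, rpow_def_of_pos (ha i),
      rpow_def_of_pos (ha' i), ← exp_add, ← exp_add]
    ring_nf
  rw [← conjDiagonal_smul, hb_exp, ha_exp]
  simpa [Fin.sum_univ_three] using h_mem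

open Real in
theorem mul_conjDiagonal_rpow_neg_mul_conjTranspose_le {V : Matrix κ ι 𝕜} {T : Matrix ι ι 𝕜}
    {S : Matrix κ κ 𝕜} (hT : T ∈ unitaryGroup ι 𝕜) (hS : S ∈ unitaryGroup κ 𝕜)
    {a a' : ι → ℝ} {b b' : κ → ℝ} (ha : ∀ i, 0 < a i) (ha' : ∀ i, 0 < a' i)
    (hb : ∀ k, 0 < b k) (hb' : ∀ k, 0 < b' k) {c : ℝ} (hc : 0 < c)
    (h : Vᴴ * conjDiagonal S b * V ≤ conjDiagonal T a)
    (h' : Vᴴ * conjDiagonal S b' * V ≤ conjDiagonal T a')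
    (hV : Vᴴ * V ≤ c • 1) {s t : ℝ} (hs : 0 ≤ s) (ht : 0 ≤ t) (hst : s + t ≤ 1) :
    V * conjDiagonal T (fun i ↦ a i ^ (-s) * a' i ^ (-t)) * Vᴴ ≤
      c ^ (1 - (s + t)) • conjDiagonal S (fun k ↦ b k ^ (-s) * b' k ^ (-t)) := by
  have h_le := conjTranspose_mul_conjDiagonal_rpow_mul_le hT hS ha ha' hb hb' hc h h' hV hs ht hst
  have hγ : 0 < c ^ (1 - (s + t)) := rpow_pos_of_pos hc _
  have hγA (i) : 0 < (c ^ (1 - (s + t)) • fun i ↦ a i ^ s * a' i ^ t) i :=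
    mul_pos hγ (mul_pos (rpow_pos_of_pos (ha i) s) (rpow_pos_of_pos (ha' i) t))
  have hB (k) : 0 < b k ^ s * b' k ^ t :=
    mul_pos (rpow_pos_of_pos (hb k) s) (rpow_pos_of_pos (hb' k) t)
  have hT_inv : (c ^ (1 - (s + t)) • fun i ↦ a i ^ s * a' i ^ t)⁻¹ =
      (c ^ (1 - (s + t)))⁻¹ • fun i ↦ a i ^ (-s) * a' i ^ (-t) := by
    ext i
    simp [rpow_neg (ha i).le, rpow_neg (ha' i).le, mul_comm]
  have hS_inv : (fun k ↦ b k ^ s * b' k ^ t)⁻¹ = fun k ↦ b k ^ (-s) * b' k ^ (-t) := by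
    ext k
    simp [rpow_neg (hb k).le, rpow_neg (hb' k).le, mul_comm]
  rwa [← conjDiagonal_smul, conjTranspose_mul_mul_le_iff_mul_inv_mul_le_inv
    (posDef_conjDiagonal hT hγA) (posDef_conjDiagonal hS hB),
    inv_conjDiagonal hT fun i ↦ (hγA i).ne', inv_conjDiagonal hS fun k ↦ (hB k).ne',
    hT_inv, hS_inv, conjDiagonal_smul, Matrix.mul_smul, Matrix.smul_mul,
    inv_smul_le_iff_of_pos hγ] at h_le

end Interpolation

section MPow

variable {k : ℕ} {A B : Matrix (Fin k) (Fin k) ℂ}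

theorem mpow_eq_conjDiagonal (hA : A.IsHermitian) (p : ℝ) :
    mpow A p = conjDiagonal (hA.eigenvectorUnitary : Matrix (Fin k) (Fin k) ℂ)
      (fun i ↦ hA.eigenvalues i ^ p) :=
  dif_pos hA

theorem conjDiagonal_eigenvectorUnitary_eigenvalues (hA : A.IsHermitian) :
    conjDiagonal (hA.eigenvectorUnitary : Matrix (Fin k) (Fin k) ℂ) hA.eigenvalues = A := by
  conv_rhs => rw [hA.spectral_theorem, Unitary.conjStarAlgAut_apply]
  rfl

theorem exists_conjDiagonal_transpose_kronecker (hA : A.PosDef) (hB : B.PosDef) :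
    ∃ S ∈ unitaryGroup (Fin k × Fin k) ℂ, ∃ a b : Fin k × Fin k → ℝ,
      (∀ i, 0 < a i) ∧ (∀ i, 0 < b i) ∧
      (1 : Matrix (Fin k) (Fin k) ℂ) ⊗ₖ A = conjDiagonal S a ∧
      Bᵀ ⊗ₖ (1 : Matrix (Fin k) (Fin k) ℂ) = conjDiagonal S b ∧
      ∀ s t, (mpow B t)ᵀ ⊗ₖ mpow A s = conjDiagonal S (fun i ↦ a i ^ s * b i ^ t) := by
  have hA_eq := conjDiagonal_eigenvectorUnitary_eigenvalues hA.1
  have hB_eq := conjDiagonal_eigenvectorUnitary_eigenvalues hB.1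
  have hU := hA.1.eigenvectorUnitary.2
  have hW := map_star_mem_unitaryGroup_iff.2 hB.1.eigenvectorUnitary.2
  refine ⟨_, kronecker_mem_unitary hW hU, fun p ↦ hA.1.eigenvalues p.2,
    fun p ↦ hB.1.eigenvalues p.1, fun p ↦ hA.eigenvalues_pos _, fun p ↦ hB.eigenvalues_pos _,
    ?_, ?_, fun s t ↦ ?_⟩
  · conv_lhs => rw [← hA_eq, ← one_smul ℝ 1, ← conjDiagonal_const hW,
      conjDiagonal_kronecker_conjDiagonal]
    simp only [one_mul]
  · conv_lhs => rw [← hB_eq, ← one_smul ℝ 1, ← conjDiagonal_const hU, transpose_conjDiagonal,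
      conjDiagonal_kronecker_conjDiagonal]
    simp only [mul_one]
  · rw [mpow_eq_conjDiagonal hA.1, mpow_eq_conjDiagonal hB.1, transpose_conjDiagonal,
      conjDiagonal_kronecker_conjDiagonal]
    exact congrArg _ (funext fun p ↦ mul_comm _ _)

theorem mul_transpose_mpow_kronecker_mpow_mul_conjTranspose_le {m n : ℕ}
    {A B : Matrix (Fin n) (Fin n) ℂ} {A' B' : Matrix (Fin m) (Fin m) ℂ}
    (hA : A.PosDef) (hB : B.PosDef) (hA' : A'.PosDef) (hB' : B'.PosDef)
    {V : Matrix (Fin n × Fin n) (Fin m × Fin m) ℂ} {c : ℝ} (hc : 0 < c)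
    (h : Vᴴ * ((1 : Matrix (Fin n) (Fin n) ℂ) ⊗ₖ A) * V ≤ (1 : Matrix (Fin m) (Fin m) ℂ) ⊗ₖ A')
    (h' : Vᴴ * (Bᵀ ⊗ₖ (1 : Matrix (Fin n) (Fin n) ℂ)) * V ≤ B'ᵀ ⊗ₖ (1 : Matrix (Fin m) (Fin m) ℂ))
    (hV : Vᴴ * V ≤ c • 1) {s t : ℝ} (hs : 0 ≤ s) (ht : 0 ≤ t) (hst : s + t ≤ 1) :
    V * ((mpow B' (-t))ᵀ ⊗ₖ mpow A' (-s)) * Vᴴ ≤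
      c ^ (1 - (s + t)) • ((mpow B (-t))ᵀ ⊗ₖ mpow A (-s)) := by
  obtain ⟨S, hS, a, b, ha, hb, hA_eq, hB_eq, hAB⟩ := exists_conjDiagonal_transpose_kronecker hA hB
  obtain ⟨T, hT, a', b', ha', hb', hA'_eq, hB'_eq, hAB'⟩ :=
    exists_conjDiagonal_transpose_kronecker hA' hB'
  rw [hA_eq, hA'_eq] at h
  rw [hB_eq, hB'_eq] at h'
  rw [hAB, hAB']
  exact mul_conjDiagonal_rpow_neg_mul_conjTranspose_le hT hS ha' hb' ha hb hc h h' hV hs ht hst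

end MPow

section ComplexMatrix

theorem exists_pos_smul_one_le {ι : Type*} [Finite ι] [DecidableEq ι] {A : Matrix ι ι ℂ}
    (hA : A.PosDef) :
    ∃ r : ℝ, 0 < r ∧ r • (1 : Matrix ι ι ℂ) ≤ A := by
  cases nonempty_fintype ι
  cases isEmpty_or_nonempty ι
  · exact ⟨1, one_pos, (Subsingleton.elim _ _).le⟩
  · simp only [← Algebra.algebraMap_eq_smul_one]
    exact (CFC.exists_pos_algebraMap_le_iff (ha := hA.1)).2 fun x hx ↦
      (isStrictlyPositive_iff_posDef.2 hA).spectrum_pos hx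

variable {ι : Type*} [Fintype ι]

-- Over `ℂ` nonnegativity of the quadratic form already forces Hermitian symmetry, by polarization.
theorem posSemidef_iff_forall_star_dotProduct_mulVec_nonneg {A : Matrix ι ι ℂ} :
    A.PosSemidef ↔ ∀ z, 0 ≤ star z ⬝ᵥ A *ᵥ z := by
  refine ⟨fun hA ↦ hA.dotProduct_mulVec_nonneg, fun h ↦ ?_⟩
  classical
  rw [← isPositive_toEuclideanLin_iff, LinearMap.isPositive_iff_complex]
  intro z
  have hz : inner ℂ (A.toEuclideanLin z) z = star z.ofLp ⬝ᵥ A *ᵥ z.ofLp := by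
    rw [← (IsSelfAdjoint.of_nonneg (h z.ofLp)).star_eq, EuclideanSpace.inner_eq_star_dotProduct,
      star_dotProduct, star_star, toLpLin_apply]
    exact dotProduct_comm _ _
  rw [hz]
  obtain ⟨hre, him⟩ := Complex.nonneg_iff.1 (h z.ofLp)
  exact ⟨Complex.ext rfl him, hre⟩

theorem posSemidef_iff_forall_trace_mul_nonneg {A : Matrix ι ι ℂ} :
    A.PosSemidef ↔ ∀ P : Matrix ι ι ℂ, P.PosSemidef → 0 ≤ (A * P).trace := by
  refine ⟨fun hA P hP ↦ ?_, fun h ↦ ?_⟩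
  · classical
    obtain ⟨C, rfl⟩ := CStarAlgebra.nonneg_iff_eq_star_mul_self.1 hP.nonneg
    rw [← Matrix.mul_assoc, trace_mul_comm, ← Matrix.mul_assoc]
    exact (hA.mul_mul_conjTranspose_same C).trace_nonneg
  · refine posSemidef_iff_forall_star_dotProduct_mulVec_nonneg.2 fun z ↦ ?_
    have hz := h _ (posSemidef_vecMulVec_self_star z)
    rwa [mul_vecMulVec, trace_vecMulVec, dotProduct_comm] at hz

theorem trace_mul_le_trace_mul {A B P : Matrix ι ι ℂ} (h : A ≤ B) (hP : P.PosSemidef) :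
    (A * P).trace ≤ (B * P).trace := by
  have := posSemidef_iff_forall_trace_mul_nonneg.1 (le_iff.1 h) P hP
  rwa [Matrix.sub_mul, trace_sub, sub_nonneg] at this

end ComplexMatrix

section TransferMatrix

variable {ι κ σ τ R : Type*} [Fintype ι] [Fintype κ] [CommSemiring R]

theorem star_vec_dotProduct_transpose_kronecker_mulVec_vec [StarRing R] (A : Matrix ι ι R)
    (B : Matrix κ κ R) (K : Matrix ι κ R) :
    star (vec K) ⬝ᵥ (Bᵀ ⊗ₖ A) *ᵥ vec K = (Kᴴ * A * K * B).trace := by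
  rw [kronecker_mulVec_vec, star_vec_dotProduct_vec, transpose_transpose]
  simp only [Matrix.mul_assoc]

variable [DecidableEq ι] [DecidableEq κ]

/-- The matrix of a linear map between matrix spaces with respect to the column-major
vectorization `Matrix.vec`; index pairs are therefore (column, row). -/
def transferMatrix (Φ : Matrix ι κ R →ₗ[R] Matrix σ τ R) : Matrix (τ × σ) (κ × ι) R :=
  of fun p q ↦ vec (Φ (single q.2 q.1 1)) p

theorem transferMatrix_mulVec_vec (Φ : Matrix ι κ R →ₗ[R] Matrix σ τ R) (K : Matrix ι κ R) :
    transferMatrix Φ *ᵥ vec K = vec (Φ K) := by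
  have hK : Φ K = ∑ i, ∑ j, K i j • Φ (single i j 1) := by
    conv_lhs => rw [matrix_eq_sum_single K]
    simp only [map_sum, ← map_smul, smul_single, smul_eq_mul, mul_one]
  ext p
  simp only [hK, vec_sum, vec_smul, Finset.sum_apply, Pi.smul_apply, smul_eq_mul, mulVec,
    dotProduct, transferMatrix, of_apply, Fintype.sum_prod_type_right, mul_comm (K _ _)]
  rfl

variable [Fintype σ] [Fintype τ]

theorem star_vec_dotProduct_transferMatrix_mulVec_vec [StarRing R]
    (Φ : Matrix ι κ R →ₗ[R] Matrix σ τ R) (A : Matrix σ σ R) (B : Matrix τ τ R) (K : Matrix ι κ R) :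
    star (vec K) ⬝ᵥ ((transferMatrix Φ)ᴴ * (Bᵀ ⊗ₖ A) * transferMatrix Φ) *ᵥ vec K =
      ((Φ K)ᴴ * A * Φ K * B).trace := by
  rw [← star_vec_dotProduct_transpose_kronecker_mulVec_vec, ← transferMatrix_mulVec_vec,
    star_mulVec, ← mulVec_mulVec, ← mulVec_mulVec, dotProduct_mulVec]

theorem conjTranspose_transferMatrix_mul_kronecker_mul_le
    {Φ : Matrix ι κ ℂ →ₗ[ℂ] Matrix σ τ ℂ} {A : Matrix σ σ ℂ} {B : Matrix τ τ ℂ}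
    {A' : Matrix ι ι ℂ} {B' : Matrix κ κ ℂ}
    (h : ∀ K, ((Φ K)ᴴ * A * Φ K * B).trace ≤ (Kᴴ * A' * K * B').trace) :
    (transferMatrix Φ)ᴴ * (Bᵀ ⊗ₖ A) * transferMatrix Φ ≤ B'ᵀ ⊗ₖ A' := by
  refine le_iff.2 (posSemidef_iff_forall_star_dotProduct_mulVec_nonneg.2 fun z ↦ ?_)
  obtain ⟨K, rfl⟩ := vec_bijective.surjective z
  rw [sub_mulVec, dotProduct_sub, star_vec_dotProduct_transpose_kronecker_mulVec_vec,
    star_vec_dotProduct_transferMatrix_mulVec_vec]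
  exact sub_nonneg.2 (h K)

end TransferMatrix

section PositiveMap

variable {m n : ℕ} {Φ : Matrix (Fin m) (Fin m) ℂ →ₗ[ℂ] Matrix (Fin n) (Fin n) ℂ}
  {Ψ : Matrix (Fin n) (Fin n) ℂ →ₗ[ℂ] Matrix (Fin m) (Fin m) ℂ}

theorem IsPositiveMap.map_conjTranspose (hΦ : IsPositiveMap Φ) (K : Matrix (Fin m) (Fin m) ℂ) :
    Φ Kᴴ = (Φ K)ᴴ :=
  map_star (PositiveLinearMap.mk₀ Φ fun A hA ↦ (hΦ A hA.posSemidef).nonneg) K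

theorem IsPositiveMap.posDef_map (hΦ : IsPositiveMap Φ) (hΦ1 : (Φ 1).PosDef)
    {A : Matrix (Fin m) (Fin m) ℂ} (hA : A.PosDef) : (Φ A).PosDef := by
  obtain ⟨r, hr, hrA⟩ := exists_pos_smul_one_le hA
  have h := (hΦ1.smul hr).add_posSemidef (hΦ _ (le_iff.1 hrA))
  rwa [map_sub, LinearMap.map_smul_of_tower, add_sub_cancel] at h

theorem IsSchwarz.isPositiveMap (hΦ : IsSchwarz Φ) : IsPositiveMap Φ := fun A hA ↦ by
  obtain ⟨C, rfl⟩ := CStarAlgebra.nonneg_iff_eq_star_mul_self.1 hA.nonneg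
  have h := (hΦ C).add (posSemidef_conjTranspose_mul_self (Φ C))
  rwa [sub_add_cancel] at h

theorem IsHSAdjoint.isPositiveMap (h : IsHSAdjoint Φ Ψ) (hΦ : IsPositiveMap Φ) :
    IsPositiveMap Ψ := fun A hA ↦ by
  rw [← posSemidef_conjTranspose_iff, posSemidef_iff_forall_trace_mul_nonneg]
  intro P hP
  rw [← h, hA.1.eq]
  exact posSemidef_iff_forall_trace_mul_nonneg.1 hA _ (hΦ P hP)

theorem IsHSAdjoint.trace_mul_map (h : IsHSAdjoint Φ Ψ) (hΦ : IsPositiveMap Φ)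
    {A : Matrix (Fin n) (Fin n) ℂ} (hA : A.PosSemidef) (K : Matrix (Fin m) (Fin m) ℂ) :
    (A * Φ K).trace = (Ψ A * K).trace := by
  rw [← hA.1.eq, h, hA.1.eq, (h.isPositiveMap hΦ A hA).1.eq]

theorem IsHSAdjoint.transferMatrix_eq (h : IsHSAdjoint Φ Ψ) :
    transferMatrix Ψ = (transferMatrix Φ)ᴴ := by
  ext p q
  have hpq := h (single q.2 q.1 1) (single p.2 p.1 1)
  rw [conjTranspose_single, trace_single_mul, trace_mul_single] at hpq
  simpa [transferMatrix, vec, eq_comm] using congrArg star hpq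

theorem IsSchwarz.conjTranspose_transferMatrix_mul_transpose_kronecker_one_mul_le
    (hΦ : IsSchwarz Φ) (h : IsHSAdjoint Φ Ψ) {A : Matrix (Fin n) (Fin n) ℂ} (hA : A.PosSemidef) :
    (transferMatrix Φ)ᴴ * (Aᵀ ⊗ₖ (1 : Matrix (Fin n) (Fin n) ℂ)) * transferMatrix Φ ≤
      (Ψ A)ᵀ ⊗ₖ (1 : Matrix (Fin m) (Fin m) ℂ) := by
  refine conjTranspose_transferMatrix_mul_kronecker_mul_le fun K ↦ ?_
  calc ((Φ K)ᴴ * 1 * Φ K * A).trace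
      ≤ (Φ (Kᴴ * K) * A).trace := by
        rw [mul_one]
        exact trace_mul_le_trace_mul (hΦ K) hA
    _ = (Kᴴ * 1 * K * Ψ A).trace := by
        rw [mul_one, trace_mul_comm, trace_mul_comm _ (Ψ A), h.trace_mul_map hΦ.isPositiveMap hA]

theorem IsSchwarz.conjTranspose_transferMatrix_mul_one_kronecker_mul_le
    (hΦ : IsSchwarz Φ) (h : IsHSAdjoint Φ Ψ) {A : Matrix (Fin n) (Fin n) ℂ} (hA : A.PosSemidef) :
    (transferMatrix Φ)ᴴ * ((1 : Matrix (Fin n) (Fin n) ℂ) ⊗ₖ A) * transferMatrix Φ ≤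
      (1 : Matrix (Fin m) (Fin m) ℂ) ⊗ₖ Ψ A := by
  rw [← transpose_one (n := Fin n), ← transpose_one (n := Fin m)]
  refine conjTranspose_transferMatrix_mul_kronecker_mul_le fun K ↦ ?_
  calc ((Φ K)ᴴ * A * Φ K * 1).trace
      = ((Φ Kᴴ)ᴴ * Φ Kᴴ * A).trace := by
        rw [hΦ.isPositiveMap.map_conjTranspose, conjTranspose_conjTranspose, mul_one,
          trace_mul_cycle]
    _ ≤ (Φ (K * Kᴴ) * A).trace := by
        simpa only [conjTranspose_conjTranspose] using trace_mul_le_trace_mul (hΦ Kᴴ) hA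
    _ = (Kᴴ * Ψ A * K * 1).trace := by
        rw [mul_one, trace_mul_cycle, trace_mul_comm, trace_mul_comm (K * Kᴴ),
          h.trace_mul_map hΦ.isPositiveMap hA]

theorem IsSchwarz.conjTranspose_transferMatrix_mul_transferMatrix_le (hΦ : IsSchwarz Φ)
    (h : IsHSAdjoint Φ Ψ) {c : ℝ} (hc : Ψ 1 ≤ (c : ℂ) • 1) :
    (transferMatrix Φ)ᴴ * transferMatrix Φ ≤ c • 1 :=
  calc (transferMatrix Φ)ᴴ * transferMatrix Φ
      = (transferMatrix Φ)ᴴ * ((1 : Matrix (Fin n) (Fin n) ℂ)ᵀ ⊗ₖ (1 : Matrix (Fin n) (Fin n) ℂ)) *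
          transferMatrix Φ := by
        rw [transpose_one, one_kronecker_one, Matrix.mul_one]
    _ ≤ (Ψ 1)ᵀ ⊗ₖ (1 : Matrix (Fin m) (Fin m) ℂ) :=
        hΦ.conjTranspose_transferMatrix_mul_transpose_kronecker_one_mul_le h .one
    _ ≤ (Ψ 1)ᵀ ⊗ₖ (1 : Matrix (Fin m) (Fin m) ℂ) + ((c : ℂ) • 1 - Ψ 1)ᵀ ⊗ₖ 1 :=
        le_add_of_nonneg_right ((le_iff.1 hc).transpose.kronecker .one).nonneg
    _ = c • 1 := by
        rw [← add_kronecker, ← transpose_add, add_sub_cancel, transpose_smul, transpose_one,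
          smul_kronecker, one_kronecker_one, Complex.coe_smul]

end PositiveMap

theorem stmt16_general {m n : ℕ} (hm : 0 < m) {s t c : ℝ} (hs : 0 ≤ s) (ht : 0 ≤ t)
    (hst : s + t ≤ 1)
    (Φ : Matrix (Fin m) (Fin m) ℂ →ₗ[ℂ] Matrix (Fin n) (Fin n) ℂ)
    (Ψ : Matrix (Fin n) (Fin n) ℂ →ₗ[ℂ] Matrix (Fin m) (Fin m) ℂ)
    (hΦ : IsSchwarz Φ) (hadj : IsHSAdjoint Φ Ψ)
    (hc : Ψ 1 ≤ (c : ℂ) • 1) (hΨ1 : (Ψ 1).PosDef)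
    {X Y : Matrix (Fin n) (Fin n) ℂ} (hX : X.PosDef) (hY : Y.PosDef)
    (K : Matrix (Fin n) (Fin n) ℂ) :
    (Ψ Kᴴ * mpow (Ψ Y) (-s) * Ψ K * mpow (Ψ X) (-t)).trace.re ≤
      c ^ (1 - (s + t)) * (Kᴴ * mpow Y (-s) * K * mpow X (-t)).trace.re := by
  have hΨ := hadj.isPositiveMap hΦ.isPositiveMap
  have hc_pos : 0 < c := by
    have h := (hΨ1.add_posSemidef (le_iff.1 hc)).diag_pos (i := ⟨0, hm⟩)
    simpa using h
  have h_le := mul_transpose_mpow_kronecker_mpow_mul_conjTranspose_le hY hX (hΨ.posDef_map hΨ1 hY)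
    (hΨ.posDef_map hΨ1 hX) hc_pos
    (hΦ.conjTranspose_transferMatrix_mul_one_kronecker_mul_le hadj hY.posSemidef)
    (hΦ.conjTranspose_transferMatrix_mul_transpose_kronecker_one_mul_le hadj hX.posSemidef)
    (hΦ.conjTranspose_transferMatrix_mul_transferMatrix_le hadj hc) hs ht hst
  rw [← conjTranspose_conjTranspose (transferMatrix Φ), ← hadj.transferMatrix_eq,
    conjTranspose_conjTranspose, le_iff] at h_le
  have h := h_le.dotProduct_mulVec_nonneg (vec K)
  rw [sub_mulVec, dotProduct_sub, smul_mulVec, dotProduct_smul,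
    star_vec_dotProduct_transpose_kronecker_mulVec_vec,
    star_vec_dotProduct_transferMatrix_mulVec_vec, sub_nonneg, ← hΨ.map_conjTranspose] at h
  simpa using (Complex.le_def.1 h).1

theorem stmt16 {m n : ℕ} (hm : 0 < m) (s t : ℝ) (hs : 0 < s) (ht : 0 < t) (hst : s + t ≤ 1)
    (Φ : Matrix (Fin m) (Fin m) ℂ →ₗ[ℂ] Matrix (Fin n) (Fin n) ℂ)
    (Ψ : Matrix (Fin n) (Fin n) ℂ →ₗ[ℂ] Matrix (Fin m) (Fin m) ℂ)
    (hΦ : IsSchwarz Φ) (hadj : IsHSAdjoint Φ Ψ)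
    (hsemi : Ψ 1 = (((n : ℝ) / m : ℝ) : ℂ) • 1) (hΨ1 : (Ψ 1).PosDef)
    (X Y : Matrix (Fin n) (Fin n) ℂ) (hX : X.PosDef) (hY : Y.PosDef)
    (K : Matrix (Fin n) (Fin n) ℂ) :
    (Ψ Kᴴ * mpow (Ψ Y) (-s) * Ψ K * mpow (Ψ X) (-t)).trace.re ≤
      ((n : ℝ) / m) ^ (1 - (s + t)) * (Kᴴ * mpow Y (-s) * K * mpow X (-t)).trace.re :=
  stmt16_general hm hs.le ht.le hst Φ Ψ hΦ hadj hsemi.le hΨ1 hX hY K
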